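/- arXiv:1503.05444 — 3 statements merged into one kernel-verified Lean document; each statement's English description precedes it below -/
import Mathlib

section
/- Let f : ℝ → ℝ be a smooth function, and define the operators (xD)f(x) = x·f′(x) and M̂f(x) = x·f(x) + x·f′(x). Then for every nonnegative integer n and every x ∈ ℝ, (M̂ⁿ f)(x) = Σ_{k=0}^{n} C(n,k) · φ_{n−k}(x) · ((xD)^k f)(x), where M̂ⁿ and (xD)^k denote n-fold and k-fold iteration of the respective operators. -/
/-- Stirling numbers of the second kind. -/
def stirling2 : ℕ → ℕ → ℕ
  | 0, 0 => 1
  | 0, _ + 1 => 0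
  | _ + 1, 0 => 0
  | n + 1, k + 1 => (k + 1) * stirling2 n (k + 1) + stirling2 n k

/-- The exponential polynomials φₙ(x) = Σ_{k=0}^{n} S(n,k) xᵏ. -/
noncomputable def expPoly (n : ℕ) (x : ℝ) : ℝ :=
  ∑ k ∈ Finset.range (n + 1), (stirling2 n k : ℝ) * x ^ k

/-- The operator (xD)f(x) = x·f′(x). -/
noncomputable def xD (f : ℝ → ℝ) : ℝ → ℝ := fun x => x * deriv f x

/-- The operator M̂f(x) = x·f(x) + x·f′(x). -/
noncomputable def Mhat (f : ℝ → ℝ) : ℝ → ℝ := fun x => x * f x + x * deriv f x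

theorem stirling2_lt : ∀ (n k : ℕ), n < k → stirling2 n k = 0
  | 0, 0, h => by omega
  | 0, k + 1, _ => by simp [stirling2]
  | n + 1, 0, h => by omega
  | n + 1, k + 1, h => by
    simp [stirling2, stirling2_lt n (k + 1) (by omega), stirling2_lt n k (by omega)]

theorem expPoly_hasDerivAt (n : ℕ) (x : ℝ) : HasDerivAt (expPoly n)
    (∑ k ∈ Finset.range (n + 1), (stirling2 n k : ℝ) * ((k : ℝ) * x ^ (k - 1))) x := by
  unfold expPoly
  exact HasDerivAt.fun_sum fun k _ => (hasDerivAt_pow k x).const_mul _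

theorem expPoly_succ (n : ℕ) (x : ℝ) :
    expPoly (n + 1) x = x * expPoly n x + x * deriv (expPoly n) x := by
  rw [(expPoly_hasDerivAt n x).deriv]
  have h1 : x * ∑ k ∈ Finset.range (n + 1), (stirling2 n k : ℝ) * ((k : ℝ) * x ^ (k - 1))
      = ∑ k ∈ Finset.range (n + 1), (k : ℝ) * (stirling2 n k : ℝ) * x ^ k := by
    rw [Finset.mul_sum]
    refine Finset.sum_congr rfl fun k _ => ?_
    rcases k with _ | k
    · simp
    · simp only [Nat.add_sub_cancel]; ring
  have h2 : ∑ k ∈ Finset.range (n + 1), (k : ℝ) * (stirling2 n k : ℝ) * x ^ k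
      = ∑ k ∈ Finset.range (n + 1), ((k + 1 : ℕ) : ℝ) * (stirling2 n (k + 1) : ℝ) * x ^ (k + 1) := by
    have a := Finset.sum_range_succ (fun k => (k : ℝ) * (stirling2 n k : ℝ) * x ^ k) (n + 1)
    rw [Finset.sum_range_succ'] at a
    simp only [stirling2_lt n (n + 1) (by omega)] at a
    simpa using a.symm
  rw [h1, h2]
  unfold expPoly
  rw [Finset.sum_range_succ', Finset.mul_sum, ← Finset.sum_add_distrib]
  simp only [stirling2, Nat.cast_zero, zero_mul, add_zero]
  refine Finset.sum_congr rfl fun k _ => ?_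
  push_cast
  ring

theorem xD_iter_contDiff (f : ℝ → ℝ) (hf : ContDiff ℝ (⊤ : ℕ∞) f) (k : ℕ) :
    ContDiff ℝ (⊤ : ℕ∞) (xD^[k] f) := by
  induction k with
  | zero => exact hf
  | succ k ih =>
    rw [Function.iterate_succ_apply']
    exact contDiff_id.mul (contDiff_infty_iff_deriv.1 ih).2

theorem stmt0 (f : ℝ → ℝ) (hf : ContDiff ℝ (⊤ : ℕ∞) f) (n : ℕ) (x : ℝ) :
    (Mhat^[n] f) x =
      ∑ k ∈ Finset.range (n + 1),
        (n.choose k : ℝ) * expPoly (n - k) x * (xD^[k] f) x := by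
  induction n generalizing x with
  | zero => simp [expPoly, stirling2]
  | succ n ih =>
    have hd : HasDerivAt (Mhat^[n] f) (∑ k ∈ Finset.range (n + 1),
        ((n.choose k : ℝ) * deriv (expPoly (n - k)) x * (xD^[k] f) x
          + (n.choose k : ℝ) * expPoly (n - k) x * deriv (xD^[k] f) x)) x := by
      rw [show Mhat^[n] f = fun x => ∑ k ∈ Finset.range (n + 1),
        (n.choose k : ℝ) * expPoly (n - k) x * (xD^[k] f) x from funext ih]
      refine HasDerivAt.fun_sum fun k _ => ?_
      have hg : HasDerivAt (xD^[k] f) (deriv (xD^[k] f) x) x :=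
        ((contDiff_infty_iff_deriv.1 (xD_iter_contDiff f hf k)).1 x).hasDerivAt
      exact ((expPoly_hasDerivAt (n - k) x).differentiableAt.hasDerivAt.const_mul _).mul hg
    have hM : (Mhat^[n + 1] f) x = ∑ k ∈ Finset.range (n + 1),
        ((n.choose k : ℝ) * expPoly (n + 1 - k) x * (xD^[k] f) x
          + (n.choose k : ℝ) * expPoly (n - k) x * (xD^[k + 1] f) x) := by
      rw [Function.iterate_succ_apply']
      simp only [Mhat]
      rw [hd.deriv, ih, Finset.mul_sum, Finset.mul_sum, ← Finset.sum_add_distrib]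
      refine Finset.sum_congr rfl fun k hk => ?_
      have : n + 1 - k = (n - k) + 1 := by
        have := Finset.mem_range.1 hk
        omega
      rw [this, expPoly_succ, Function.iterate_succ_apply']
      simp only [xD]
      ring
    rw [hM, Finset.sum_add_distrib, Finset.sum_range_succ' _ (n + 1)]
    have a := Finset.sum_range_succ (fun k => (n.choose k : ℝ) * expPoly (n + 1 - k) x *
      (xD^[k] f) x) (n + 1)
    rw [Finset.sum_range_succ'] at a
    simp only [Nat.choose_succ_self, Nat.cast_zero, zero_mul, add_zero] at a
    rw [← a]
    simp only [Nat.choose_succ_succ', Nat.cast_add, add_mul, Finset.sum_add_distrib,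
      Nat.add_sub_add_right, Nat.choose_zero_right]
    ring
end

section
/- For every nonnegative integer m and every integer k, the series Σ_{n=0}^{∞} b_{n+m} · (kiπ)ⁿ/n! converges and equals b_m if k is even, and equals e^{−2} · b̃_m if k is odd. -/
/-- The Bell numbers bₙ = Σ_{k=0}^{n} S(n,k). -/
def bell (n : ℕ) : ℕ := ∑ k ∈ Finset.range (n + 1), stirling2 n k

/-- The complementary Bell numbers b̃ₙ = Σ_{k=0}^{n} S(n,k)(−1)ᵏ. -/
def cbell (n : ℕ) : ℤ := ∑ k ∈ Finset.range (n + 1), (stirling2 n k : ℤ) * (-1) ^ k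

lemma hasSum_congr_aux {f g : ℕ → ℂ} {a b : ℂ} (h : HasSum f a) (hf : ∀ n, g n = f n)
    (hb : b = a) : HasSum g b := by
  obtain rfl : g = f := funext hf
  rwa [hb]

lemma stirling2_eq (n k : ℕ) : stirling2 n k = Nat.stirlingSecond n k := by
  induction n generalizing k with
  | zero => cases k <;> simp [stirling2, Nat.stirlingSecond]
  | succ n ih => cases k <;> simp [stirling2, Nat.stirlingSecond, ih]

lemma stirling2_zero_of_lt {n k : ℕ} (h : n < k) : stirling2 n k = 0 := by
  rw [stirling2_eq, Nat.stirlingSecond_eq_zero_of_lt h]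

lemma mul_descFactorial (j k : ℕ) :
    j * j.descFactorial k = j.descFactorial (k + 1) + k * j.descFactorial k := by
  rw [Nat.descFactorial_succ]
  rcases lt_or_ge j k with h | h
  · simp [Nat.descFactorial_eq_zero_iff_lt.2 h]
  · rw [← add_mul, Nat.sub_add_cancel h]

lemma pow_eq_stirling (n j : ℕ) :
    j ^ n = ∑ k ∈ Finset.range (n + 1), stirling2 n k * j.descFactorial k := by
  induction n with
  | zero => simp [stirling2]
  | succ n ih =>
    rw [pow_succ, ih, Finset.sum_mul, Finset.sum_range_succ' _ (n + 1)]
    have h1 : ∀ k, stirling2 n k * j.descFactorial k * j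
        = stirling2 n k * j.descFactorial (k + 1) + k * stirling2 n k * j.descFactorial k := by
      intro k
      rw [mul_assoc, mul_comm _ j, mul_descFactorial]; ring
    have h2 : ∀ k, stirling2 (n + 1) (k + 1) * j.descFactorial (k + 1)
        = stirling2 n k * j.descFactorial (k + 1)
          + (k + 1 : ℕ) * stirling2 n (k + 1) * j.descFactorial (k + 1) := by
      intro k
      rw [stirling2]; ring
    simp only [h1, h2, Finset.sum_add_distrib]
    have h3 := Finset.sum_range_succ' (fun k => k * stirling2 n k * j.descFactorial k) (n + 1)
    rw [Finset.sum_range_succ, stirling2_zero_of_lt (Nat.lt_succ_self n)] at h3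
    simp only [stirling2, zero_mul, mul_zero, add_zero] at h3 ⊢
    rw [h3]

lemma hasSum_desc (k : ℕ) (x : ℂ) :
    HasSum (fun j : ℕ => (j.descFactorial k : ℂ) * x ^ j / (j.factorial : ℂ))
      (x ^ k * Complex.exp x) := by
  rw [← hasSum_nat_add_iff' k]
  have h0 : ∑ i ∈ Finset.range k, ((i.descFactorial k : ℂ) * x ^ i / (i.factorial : ℂ)) = 0 := by
    apply Finset.sum_eq_zero
    intro i hi
    simp [Nat.descFactorial_eq_zero_iff_lt.2 (Finset.mem_range.1 hi)]
  rw [h0, sub_zero]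
  have h := (NormedSpace.expSeries_div_hasSum_exp (𝔸 := ℂ) x).mul_left (x ^ k)
  rw [← Complex.exp_eq_exp_ℂ] at h
  refine hasSum_congr_aux h (fun j => ?_) rfl
  have h1 := Nat.factorial_mul_descFactorial (Nat.le_add_left k j)
  rw [Nat.add_sub_cancel] at h1
  rw [← h1]
  have h2 : ((j + k).descFactorial k : ℂ) ≠ 0 := by
    rw [Nat.cast_ne_zero, Ne, Nat.descFactorial_eq_zero_iff_lt]; omega
  have h3 : (j.factorial : ℂ) ≠ 0 := by exact_mod_cast j.factorial_ne_zero
  push_cast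
  field_simp
  ring

/-- Dobinski's formula. -/
lemma dobinski (n : ℕ) (x : ℂ) :
    HasSum (fun j : ℕ => (j : ℂ) ^ n * x ^ j / (j.factorial : ℂ))
      ((∑ k ∈ Finset.range (n + 1), (stirling2 n k : ℂ) * x ^ k) * Complex.exp x) := by
  have h := hasSum_sum (s := Finset.range (n + 1))
    (fun k _ => (hasSum_desc k x).mul_left (stirling2 n k : ℂ))
  rw [Finset.sum_mul]
  refine hasSum_congr_aux h (fun j => ?_) (Finset.sum_congr rfl fun k _ => by ring)
  · have := congrArg (Nat.cast (R := ℂ)) (pow_eq_stirling n j)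
    push_cast at this
    rw [this, Finset.sum_mul, Finset.sum_div]
    exact Finset.sum_congr rfl fun k _ => by ring

lemma bell_cast (n : ℕ) :
    (bell n : ℂ) = ∑ k ∈ Finset.range (n + 1), (stirling2 n k : ℂ) * 1 ^ k := by
  simp [bell]

lemma exp_hasSum (z : ℂ) :
    HasSum (fun n : ℕ => z ^ n / (n.factorial : ℂ)) (Complex.exp z) := by
  have h := NormedSpace.expSeries_div_hasSum_exp (𝔸 := ℂ) z
  rwa [← Complex.exp_eq_exp_ℂ] at h

lemma inner_hasSum (m j : ℕ) (z : ℂ) :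
    HasSum (fun n : ℕ => (j : ℂ) ^ m / (j.factorial : ℂ) * ((j * z) ^ n / (n.factorial : ℂ)))
      ((j : ℂ) ^ m * Complex.exp z ^ j / (j.factorial : ℂ)) := by
  have h := (exp_hasSum (j * z)).mul_left ((j : ℂ) ^ m / (j.factorial : ℂ))
  rw [Complex.exp_nat_mul] at h
  exact hasSum_congr_aux h (fun _ => rfl) (by ring)

lemma main_summable (m : ℕ) (z : ℂ) :
    Summable (fun p : ℕ × ℕ =>
      (p.1 : ℂ) ^ m / (p.1.factorial : ℂ) * ((p.1 * z) ^ p.2 / (p.2.factorial : ℂ))) := by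
  apply Summable.of_norm
  have key : ∀ j : ℕ, HasSum (fun n : ℕ =>
      ‖(j : ℂ) ^ m / (j.factorial : ℂ) * ((j * z) ^ n / (n.factorial : ℂ))‖)
      ‖(j : ℂ) ^ m * Complex.exp (‖z‖ : ℂ) ^ j / (j.factorial : ℂ)‖ := by
    intro j
    rw [← Complex.hasSum_ofReal]
    refine hasSum_congr_aux (inner_hasSum m j (‖z‖ : ℂ)) (fun n => ?_) ?_
    · simp
    · rw [← Complex.ofReal_exp]
      simp
  rw [summable_prod_of_nonneg (fun p => norm_nonneg _)]
  refine ⟨fun j => (key j).summable, ?_⟩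
  simp only [fun j => (key j).tsum_eq]
  exact (dobinski m _).summable.norm

lemma main_hasSum (m : ℕ) (z : ℂ) :
    HasSum (fun n : ℕ => (bell (n + m) : ℂ) * z ^ n / (n.factorial : ℂ))
      (Complex.exp (-1) * ((∑ k ∈ Finset.range (m + 1), (stirling2 m k : ℂ) * Complex.exp z ^ k)
        * Complex.exp (Complex.exp z))) := by
  obtain ⟨s, hs⟩ := main_summable m z
  have h1 := hs.prod_fiberwise (fun j => inner_hasSum m j z)
  have hs' := (Equiv.prodComm ℕ ℕ).hasSum_iff.2 hs
  have h2 := hs'.prod_fiberwise (g := fun n : ℕ =>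
      Complex.exp 1 * ((bell (n + m) : ℂ) * z ^ n / (n.factorial : ℂ))) (fun n => by
    have h := (dobinski (n + m) 1).mul_right (z ^ n / (n.factorial : ℂ))
    rw [← bell_cast] at h
    refine hasSum_congr_aux h (fun j => ?_) (by ring)
    · simp only [Function.comp, Equiv.prodComm_apply, Prod.swap, one_pow, mul_pow, pow_add]
      ring)
  rw [← h1.unique (dobinski m (Complex.exp z))]
  refine hasSum_congr_aux (h2.mul_left (Complex.exp (-1))) (fun n => ?_) rfl
  rw [← mul_assoc, ← Complex.exp_add]
  simp

theorem stmt4 (m : ℕ) (k : ℤ) :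
    HasSum
      (fun n : ℕ =>
        (bell (n + m) : ℂ) * ((k : ℂ) * Complex.I * (Real.pi : ℂ)) ^ n / (n.factorial : ℂ))
      (if Even k then (bell m : ℂ) else Complex.exp (-2) * (cbell m : ℂ)) := by
  have h := main_hasSum m ((k : ℂ) * Complex.I * (Real.pi : ℂ))
  split_ifs with hk
  · obtain ⟨r, rfl⟩ := hk
    have he : Complex.exp (((r + r : ℤ) : ℂ) * Complex.I * (Real.pi : ℂ)) = 1 := by
      rw [Complex.exp_eq_one_iff]
      exact ⟨r, by push_cast; ring⟩
    rw [he, ← bell_cast, mul_comm (bell m : ℂ), ← mul_assoc, ← Complex.exp_add] at h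
    simpa using h
  · rw [Int.not_even_iff_odd] at hk
    obtain ⟨r, rfl⟩ := hk
    have he : Complex.exp (((2 * r + 1 : ℤ) : ℂ) * Complex.I * (Real.pi : ℂ)) = -1 := by
      have h1 : ((2 * r + 1 : ℤ) : ℂ) * Complex.I * (Real.pi : ℂ)
          = r * (2 * Real.pi * Complex.I) + Real.pi * Complex.I := by push_cast; ring
      rw [h1, Complex.exp_add, Complex.exp_int_mul_two_pi_mul_I, Complex.exp_pi_mul_I, one_mul]
    rw [he] at h
    refine hasSum_congr_aux h (fun _ => rfl) ?_
    have hc : (cbell m : ℂ)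
        = ∑ k ∈ Finset.range (m + 1), (stirling2 m k : ℂ) * (-1) ^ k := by
      simp [cbell]
    rw [← hc, mul_left_comm, ← Complex.exp_add, mul_comm]
    norm_num
end

section
/- For every real α > 0, every nonnegative integer n, and every x ∈ ℝ, w_n^{(α)}(x) = (1/Γ(α)) · ∫_{0}^{∞} λ^{α−1} e^{−λ} φ_n(xλ) dλ. -/
/-- Generalized binomial coefficient C(α+k−1,k) = α(α+1)⋯(α+k−1)/k!. -/
noncomputable def gbinom (α : ℝ) (k : ℕ) : ℝ :=
  Polynomial.eval α (ascPochhammer ℝ k) / (k.factorial : ℝ)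

/-- The general geometric polynomials w_n^{(α)}(x). -/
noncomputable def geomPoly (α : ℝ) (n : ℕ) (x : ℝ) : ℝ :=
  ∑ k ∈ Finset.range (n + 1), (stirling2 n k : ℝ) * gbinom α k * (k.factorial : ℝ) * x ^ k

theorem gamma_shift (α : ℝ) (hα : 0 < α) (k : ℕ) :
    Real.Gamma (α + k) = Polynomial.eval α (ascPochhammer ℝ k) * Real.Gamma α := by
  induction k with
  | zero => simp
  | succ k ih =>
    have h : α + (k : ℝ) ≠ 0 := by positivity
    rw [ascPochhammer_succ_eval]
    push_cast
    rw [← add_assoc, Real.Gamma_add_one h, ih]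
    ring

theorem stmt5 (α : ℝ) (hα : 0 < α) (n : ℕ) (x : ℝ) :
    geomPoly α n x =
      (1 / Real.Gamma α) *
        ∫ l in Set.Ioi (0 : ℝ), l ^ (α - 1) * Real.exp (-l) * expPoly n (x * l) := by
  have hG : Real.Gamma α ≠ 0 := (Real.Gamma_pos_of_pos hα).ne'
  have hpos : ∀ k : ℕ, 0 < α + (k : ℝ) := fun k => by positivity
  have key : ∫ l in Set.Ioi (0 : ℝ), l ^ (α - 1) * Real.exp (-l) * expPoly n (x * l)
      = ∫ l in Set.Ioi (0 : ℝ), ∑ k ∈ Finset.range (n + 1),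
        ((stirling2 n k : ℝ) * x ^ k) * (Real.exp (-l) * l ^ (α + (k : ℝ) - 1)) := by
    refine MeasureTheory.setIntegral_congr_fun measurableSet_Ioi ?_
    intro l hl
    have hl0 : (0 : ℝ) < l := hl
    simp only [expPoly, Finset.mul_sum]
    refine Finset.sum_congr rfl fun k _ => ?_
    have e : l ^ (α + (k : ℝ) - 1) = l ^ (α - 1) * l ^ k := by
      rw [← Real.rpow_natCast l k, ← Real.rpow_add hl0]
      congr 1
      ring
    rw [e, mul_pow]
    ring
  rw [key, MeasureTheory.integral_finsetSum]
  · simp only [MeasureTheory.integral_const_mul]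
    rw [geomPoly, Finset.mul_sum]
    refine Finset.sum_congr rfl fun k _ => ?_
    rw [← Real.Gamma_eq_integral (hpos k), gamma_shift α hα k, gbinom]
    have hk : (k.factorial : ℝ) ≠ 0 := by positivity
    field_simp
  · intro k _
    exact (Real.GammaIntegral_convergent (hpos k)).const_mul _
end
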